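/- arXiv:0907.3740 — 2 statements merged into one kernel-verified Lean document; each statement's English description precedes it below -/
import Mathlib

section
/- Let n ≥ 2 and let X = (X_1, ..., X_n) be a vector of independent (not necessarily identically distributed) random variables with values in [0,1], and let δ > 0. Then with probability at least 1 − δ in X one has E[P_n(X)] ≤ P_n(X) + sqrt(2 V_n(X) ln(2/δ) / n) + 7 ln(2/δ) / (3(n−1)). -/
/-! The bound combines two exponential inequalities, each of which fails with probability at most
`δ / 2`. Write `L = log (2 / δ)` and `W = 𝔼 Vₙ`.

* Bernstein's inequality for `S = ∑ᵢ (𝔼 Xᵢ - Xᵢ)` (`bernstein_tail`). By independence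
  `𝔼 (Xᵢ - Xⱼ)² ≥ Var Xᵢ + Var Xⱼ` for `i ≠ j`, hence `∑ᵢ Var Xᵢ ≤ n W`
  (`sum_variance_le_integral_sampleVar`), so `W` may replace the mean variance.
* A lower tail bound for `Vₙ` (`sampleVar_tail`), which yields
  `√W ≤ √Vₙ + √(2 L / (n - 1))`. The unordered pairs `{i, j}` are sorted into `n` classes according
  to `i + j = c` modulo `n`. The pairs of one class are disjoint, so the corresponding
  squared differences `(Xᵢ - Xⱼ)² ∈ [0, 1]` are independent, and `exp (-y) ≤ 1 - y + y² / 2` bounds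
  the exponential moment of a class by the exponential of `-(s - s² / 2)` times its mean.
  `Vₙ` is an average over the classes, and convexity of `exp`, applied to the class sums
  *after* they are compensated by their means, transfers the bound to `Vₙ` even
  though the classes are not identically distributed.

Substituting the second inequality into the first gives the constant
`2 / √(n (n - 1)) + 1 / (3 n) ≤ 7 / (3 (n - 1))`. -/

open MeasureTheory

/-- Sample mean `P_n(x) = (1/n) ∑ᵢ xᵢ`. -/
noncomputable def sampleMean (n : ℕ) (x : Fin n → ℝ) : ℝ := (∑ i, x i) / n

/-- Sample variance `V_n(x) = (1/(n(n-1))) ∑_{i<j} (xᵢ - xⱼ)² = (1/(2n(n-1))) ∑_{i,j} (xᵢ - xⱼ)²`. -/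
noncomputable def sampleVar (n : ℕ) (x : Fin n → ℝ) : ℝ :=
  (∑ i, ∑ j, (x i - x j) ^ 2) / (2 * (n : ℝ) * ((n : ℝ) - 1))

open ProbabilityTheory

/-! ### Elementary bounds on the exponential -/

lemma exp_neg_le_quadratic {x : ℝ} (hx : 0 ≤ x) : Real.exp (-x) ≤ 1 - x + x ^ 2 / 2 := by
  have h := Real.quadratic_le_exp_of_nonneg hx
  have h2 : Real.exp (-x) * Real.exp x = 1 := by rw [← Real.exp_add]; simp
  have h3 : 0 < Real.exp (-x) := Real.exp_pos _
  have h4 : Real.exp (-x) * (1 + x + x ^ 2 / 2) ≤ 1 := by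
    exact (mul_le_mul_of_nonneg_left h h3.le).trans_eq h2
  have h5 : (0 : ℝ) < 1 + x + x ^ 2 / 2 := by positivity
  have h6 : 1 ≤ (1 - x + x ^ 2 / 2) * (1 + x + x ^ 2 / 2) := by nlinarith [sq_nonneg (x ^ 2)]
  exact le_of_mul_le_mul_right (h4.trans h6) h5

/-- The `[2/1]` Padé approximant of `exp` is an upper bound on `[0, 3)`, here with the denominator
cleared. -/
lemma exp_mul_le_pade {t : ℝ} (ht : 0 ≤ t) :
    Real.exp t * (6 - 2 * t) ≤ 6 + 4 * t + t ^ 2 := by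
  have key : ∀ (f f' : ℝ → ℝ), (∀ x, HasDerivAt f (f' x) x) → f 0 = 0 →
      (∀ x, 0 ≤ x → 0 ≤ f' x) → ∀ x, 0 ≤ x → 0 ≤ f x := by
    intro f f' hf h0 hf' x hx
    have hm : MonotoneOn f (Set.Ici 0) := by
      apply monotoneOn_of_deriv_nonneg (convex_Ici 0)
      · exact fun y _ => (hf y).continuousAt.continuousWithinAt
      · exact fun y _ => (hf y).differentiableAt.differentiableWithinAt
      · intro y hy
        rw [(hf y).deriv]
        rw [interior_Ici] at hy
        exact hf' y (le_of_lt hy)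
    rw [← h0]
    exact hm (Set.mem_Ici.2 le_rfl) hx hx
  have h2 : ∀ x : ℝ, 0 ≤ x → 0 ≤ 2 - Real.exp x * (2 - 2 * x) := by
    apply key _ (fun x => Real.exp x * (2 * x))
    · intro x
      convert! ((Real.hasDerivAt_exp x).mul
        (((hasDerivAt_id x).const_mul 2).const_sub 2)).const_sub 2 using 1
      simp only [id]; ring
    · simp
    · intro x hx; positivity
  have h1 : ∀ x : ℝ, 0 ≤ x → 0 ≤ 4 + 2 * x - Real.exp x * (4 - 2 * x) := by
    apply key _ (fun x => 2 - Real.exp x * (2 - 2 * x))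
    · intro x
      convert! (((hasDerivAt_id x).const_mul 2).const_add 4).sub ((Real.hasDerivAt_exp x).mul
        (((hasDerivAt_id x).const_mul 2).const_sub 4)) using 1
      simp only [id]; ring
    · simp
    · exact h2
  have h0 : ∀ x : ℝ, 0 ≤ x → 0 ≤ 6 + 4 * x + x ^ 2 - Real.exp x * (6 - 2 * x) := by
    apply key _ (fun x => 4 + 2 * x - Real.exp x * (4 - 2 * x))
    · intro x
      convert! ((((hasDerivAt_id x).const_mul 4).const_add 6).add ((hasDerivAt_id x).pow 2)).sub
        ((Real.hasDerivAt_exp x).mul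
        (((hasDerivAt_id x).const_mul 2).const_sub 6)) using 1
      simp only [id]; ring
    · simp
    · exact h1
  linarith [h0 t ht]

/-- Bernstein's one-sided quadratic bound; it needs `y` bounded above only. -/
lemma exp_mul_le_bernstein {l y : ℝ} (hl : 0 ≤ l) (hl3 : l < 3) (hy : y ≤ 1) :
    Real.exp (l * y) ≤ 1 + l * y + l ^ 2 / (2 * (1 - l / 3)) * y ^ 2 := by
  have hd : 0 < 2 * (1 - l / 3) := by linarith
  rcases le_total 0 y with h0 | h0
  · have hly : l * y ≤ l := by nlinarith
    have hp := exp_mul_le_pade (mul_nonneg hl h0)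
    have hd' : 0 < 2 * (1 - l * y / 3) := by linarith
    have h1 : Real.exp (l * y) ≤ 1 + l * y + (l * y) ^ 2 / (2 * (1 - l * y / 3)) := by
      have : 1 + l * y + (l * y) ^ 2 / (2 * (1 - l * y / 3))
          = (6 + 4 * (l * y) + (l * y) ^ 2) / (6 - 2 * (l * y)) := by
        have h4 : 3 - l * y ≠ 0 := by linarith
        rw [show 6 - 2 * (l * y) = 2 * (3 - l * y) by ring,
          show 2 * (1 - l * y / 3) = 2 * (3 - l * y) / 3 by ring]
        field_simp
        ring
      rw [this, le_div_iff₀ (by linarith)]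
      exact hp
    have h2 : (l * y) ^ 2 / (2 * (1 - l * y / 3)) ≤ (l * y) ^ 2 / (2 * (1 - l / 3)) :=
      div_le_div_of_nonneg_left (sq_nonneg _) hd (by linarith)
    have h3 : (l * y) ^ 2 / (2 * (1 - l / 3)) = l ^ 2 / (2 * (1 - l / 3)) * y ^ 2 := by ring
    linarith
  · have h := exp_neg_le_quadratic (x := -(l * y)) (by nlinarith)
    rw [neg_neg] at h
    have h2 : l ^ 2 / 2 ≤ l ^ 2 / (2 * (1 - l / 3)) :=
      div_le_div_of_nonneg_left (sq_nonneg _) hd (by linarith)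
    nlinarith [mul_le_mul_of_nonneg_right h2 (sq_nonneg y)]

/-! ### Laws on the unit cube -/

section Cube

variable {n : ℕ} {M : Measure (Fin n → ℝ)} [IsProbabilityMeasure M]

lemma integrable_of_continuous_cube (hae : ∀ᵐ x ∂M, ∀ i, x i ∈ Set.Icc (0 : ℝ) 1)
    {f : (Fin n → ℝ) → ℝ} (hf : Continuous f) : Integrable f M := by
  have hc : IsCompact (Set.pi Set.univ fun _ : Fin n => Set.Icc (0 : ℝ) 1) :=
    isCompact_univ_pi fun _ => isCompact_Icc
  obtain ⟨C, hC⟩ := hc.exists_bound_of_continuousOn hf.continuousOn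
  refine Integrable.of_bound hf.aestronglyMeasurable C ?_
  filter_upwards [hae] with x hx
  exact hC x fun i _ => hx i

/-- Markov's inequality for the exponential of a continuous function. -/
lemma chernoff_cube (hae : ∀ᵐ x ∂M, ∀ i, x i ∈ Set.Icc (0 : ℝ) 1)
    {f : (Fin n → ℝ) → ℝ} (hf : Continuous f) {b : ℝ}
    (hb : ∫ x, Real.exp (f x) ∂M ≤ Real.exp b) (a : ℝ) :
    M.real {x | a ≤ f x} ≤ Real.exp (b - a) := by
  have h := mul_meas_ge_le_integral_of_nonneg (μ := M) (f := fun x => Real.exp (f x))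
    (Filter.Eventually.of_forall fun x => (Real.exp_pos _).le)
    (integrable_of_continuous_cube hae (by fun_prop)) (Real.exp a)
  simp only [Real.exp_le_exp] at h
  rw [Real.exp_sub, le_div_iff₀ (Real.exp_pos _), mul_comm]
  exact h.trans hb

/-! ### Bernstein's inequality -/

lemma integral_exp_centered_le (hae : ∀ᵐ x ∂M, ∀ i, x i ∈ Set.Icc (0 : ℝ) 1)
    {l : ℝ} (hl : 0 ≤ l) (hl3 : l < 3) (i : Fin n) :
    ∫ x, Real.exp (l * ((∫ z, z i ∂M) - x i)) ∂M ≤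
      Real.exp (l ^ 2 / (2 * (1 - l / 3)) * Var[fun x => x i; M]) := by
  set m := ∫ z, z i ∂M with hm
  set β := l ^ 2 / (2 * (1 - l / 3))
  have hI : ∀ {f : (Fin n → ℝ) → ℝ}, Continuous f → Integrable f M :=
    fun hf => integrable_of_continuous_cube hae hf
  have hm1 : m ≤ 1 := by
    calc m ≤ ∫ _, (1 : ℝ) ∂M := by
          apply integral_mono_ae (hI (by fun_prop)) (by simp)
          filter_upwards [hae] with x hx using (hx i).2
      _ = 1 := by simp
  have hvar : Var[fun x => x i; M] = ∫ x, (x i - m) ^ 2 ∂M :=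
    variance_eq_integral (measurable_pi_apply i).aemeasurable
  have h1 : ∫ x, Real.exp (l * (m - x i)) ∂M ≤
      ∫ x, (1 + l * (m - x i) + β * (x i - m) ^ 2) ∂M := by
    apply integral_mono_ae (hI (by fun_prop)) (hI (by fun_prop))
    filter_upwards [hae] with x hx
    have := exp_mul_le_bernstein (y := m - x i) hl hl3 (by linarith [(hx i).1])
    calc _ ≤ _ := this
      _ = _ := by ring
  have h2 : ∫ x, (1 + l * (m - x i) + β * (x i - m) ^ 2) ∂M = 1 + β * Var[fun x => x i; M] := by
    rw [integral_add (hI (by fun_prop)) (hI (by fun_prop)),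
      integral_add (hI (by fun_prop)) (hI (by fun_prop)), integral_const_mul, integral_const_mul,
      integral_sub (hI (by fun_prop)) (hI (by fun_prop)), ← hvar, ← hm]
    simp
  rw [h2] at h1
  linarith [Real.add_one_le_exp (β * Var[fun x => x i; M])]

/-- Bernstein's inequality, with the deviation and the exponent expressed through the ratio `r`:
for `r = √(2 L / v)` the deviation is `√(2 v L) + L / 3` and the bound is `exp (-L)`. -/
lemma bernstein_tail (hae : ∀ᵐ x ∂M, ∀ i, x i ∈ Set.Icc (0 : ℝ) 1)
    (hind : iIndepFun (fun (i : Fin n) (x : Fin n → ℝ) => x i) M)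
    {v r : ℝ} (hr : 0 < r) (hv : ∑ i, Var[fun x => x i; M] ≤ v) :
    M.real {x | v * r + v * r ^ 2 / 6 ≤ ∑ i, ((∫ z, z i ∂M) - x i)} ≤
      Real.exp (-(v * r ^ 2 / 2)) := by
  -- the minimiser of the Chernoff exponent
  set l := r / (1 + r / 3) with hl
  have hl0 : 0 < l := by positivity
  have h1l : 1 - l / 3 = 1 / (1 + r / 3) := by
    rw [hl]; field_simp; ring
  have hl3 : l < 3 := by
    have : 0 < 1 / (1 + r / 3) := by positivity
    linarith
  set β := l ^ 2 / (2 * (1 - l / 3)) with hβ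
  have hβ0 : 0 ≤ β := by rw [hβ, h1l]; positivity
  have hmgf : ∫ x, Real.exp (l * ∑ i, ((∫ z, z i ∂M) - x i)) ∂M ≤ Real.exp (β * v) := by
    calc ∫ x, Real.exp (l * ∑ i, ((∫ z, z i ∂M) - x i)) ∂M
        = ∫ x, ∏ i, Real.exp (l * ((∫ z, z i ∂M) - x i)) ∂M := by
          simp_rw [Finset.mul_sum, Real.exp_sum]
      _ = ∏ i, ∫ x, Real.exp (l * ((∫ z, z i ∂M) - x i)) ∂M := by
          refine hind.integral_fun_prod_comp (f := fun i y => Real.exp (l * ((∫ z, z i ∂M) - y)))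
            (fun i => (measurable_pi_apply i).aemeasurable) (fun i => ?_)
          exact Continuous.aestronglyMeasurable (by fun_prop)
      _ ≤ ∏ i, Real.exp (β * Var[fun x => x i; M]) := by
          apply Finset.prod_le_prod
          · exact fun i _ => integral_nonneg fun x => (Real.exp_pos _).le
          · exact fun i _ => integral_exp_centered_le hae hl0.le hl3 i
      _ = Real.exp (β * ∑ i, Var[fun x => x i; M]) := by
          rw [← Real.exp_sum, Finset.mul_sum]
      _ ≤ _ := Real.exp_le_exp.2 (mul_le_mul_of_nonneg_left hv hβ0)
  have hch := chernoff_cube hae (by fun_prop) hmgf (l * (v * r + v * r ^ 2 / 6))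
  have hset : {x : Fin n → ℝ | l * (v * r + v * r ^ 2 / 6) ≤ l * ∑ i, ((∫ z, z i ∂M) - x i)}
      = {x | v * r + v * r ^ 2 / 6 ≤ ∑ i, ((∫ z, z i ∂M) - x i)} := by
    ext x; exact mul_le_mul_iff_right₀ hl0
  have hexp : β * v - l * (v * r + v * r ^ 2 / 6) = -(v * r ^ 2 / 2) := by
    rw [hβ, h1l, hl]; field_simp; ring
  rwa [hset, hexp] at hch

/-! ### The expected sample variance -/

lemma continuous_sampleVar : Continuous (sampleVar n) := by
  unfold sampleVar; fun_prop

lemma sum_variance_le_integral_sampleVar (hn : 2 ≤ n)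
    (hae : ∀ᵐ x ∂M, ∀ i, x i ∈ Set.Icc (0 : ℝ) 1)
    (hind : iIndepFun (fun (i : Fin n) (x : Fin n → ℝ) => x i) M) :
    ∑ i, Var[fun x => x i; M] ≤ n * ∫ x, sampleVar n x ∂M := by
  have hI : ∀ {f : (Fin n → ℝ) → ℝ}, Continuous f → Integrable f M :=
    fun hf => integrable_of_continuous_cube hae hf
  have hL : ∀ i : Fin n, MemLp (fun x : Fin n → ℝ => x i) 2 M := fun i =>
    (memLp_two_iff_integrable_sq (measurable_pi_apply i).aestronglyMeasurable).2 (hI (by fun_prop))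
  set V : Fin n → ℝ := fun i => Var[fun x => x i; M]
  have hpair : ∀ i j : Fin n, V i + V j - (if i = j then 2 * V i else 0)
      ≤ ∫ x, (x i - x j) ^ 2 ∂M := by
    intro i j
    by_cases hij : i = j
    · subst hij; simp; linarith
    · have h1 := variance_le_expectation_sq (μ := M) (X := fun x : Fin n → ℝ => x i - x j)
        (by fun_prop)
      rw [variance_fun_sub (hL i) (hL j),
        (hind.indepFun hij).covariance_eq_zero (hL i) (hL j)] at h1
      simp only [hij, if_false]
      simp only [Pi.pow_apply] at h1
      linarith
  have hE : ∫ x, sampleVar n x ∂M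
      = (∑ i, ∑ j, ∫ x, (x i - x j) ^ 2 ∂M) / (2 * (n : ℝ) * ((n : ℝ) - 1)) := by
    unfold sampleVar
    rw [integral_div, integral_finsetSum _ (fun i _ => hI (by fun_prop))]
    congr 1
    refine Finset.sum_congr rfl fun i _ => ?_
    rw [integral_finsetSum _ (fun j _ => hI (by fun_prop))]
  have hsum : ∑ i, ∑ j, (V i + V j - (if i = j then 2 * V i else 0))
      = 2 * ((n : ℝ) - 1) * ∑ i, V i := by
    simp only [Finset.sum_sub_distrib, Finset.sum_add_distrib, Finset.sum_const,
      Finset.card_univ, Fintype.card_fin, nsmul_eq_mul, Finset.sum_ite_eq, Finset.mem_univ,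
      if_true, ← Finset.mul_sum]
    ring
  have hle := Finset.sum_le_sum fun i (_ : i ∈ Finset.univ) =>
    Finset.sum_le_sum fun j (_ : j ∈ Finset.univ) => hpair i j
  rw [hsum] at hle
  have hn' : (2 : ℝ) ≤ n := by exact_mod_cast hn
  have hn1 : (0 : ℝ) < (n : ℝ) - 1 := by linarith
  have : (n : ℝ) * ∫ x, sampleVar n x ∂M
      = (∑ i, ∑ j, ∫ x, (x i - x j) ^ 2 ∂M) / (2 * ((n : ℝ) - 1)) := by
    rw [hE]; field_simp
  rw [this, le_div_iff₀ (by positivity)]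
  linarith

/-! ### Lower tail of the sample variance -/

/-- The pairs `i < j` with `i + j = c` modulo `n`, represented by their smaller element `i`;
the larger one is `c - i`. -/
def pairClass [NeZero n] (c : Fin n) : Finset (Fin n) := Finset.univ.filter fun i => i < c - i

lemma sampleVar_eq_sum_pairClass [NeZero n] (x : Fin n → ℝ) :
    sampleVar n x = (∑ c, ∑ i ∈ pairClass c, (x i - x (c - i)) ^ 2) /
      ((n : ℝ) * ((n : ℝ) - 1)) := by
  have h1 : ∑ c, ∑ i ∈ pairClass c, (x i - x (c - i)) ^ 2
      = ∑ i, ∑ j, if i < j then (x i - x j) ^ 2 else 0 := by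
    simp only [pairClass, Finset.sum_filter]
    rw [Finset.sum_comm]
    refine Finset.sum_congr rfl fun i _ => ?_
    exact (Equiv.subRight i).sum_comp (fun j => if i < j then (x i - x j) ^ 2 else 0)
  have h2 : ∑ i, ∑ j, (x i - x j) ^ 2
      = 2 * ∑ i, ∑ j, if i < j then (x i - x j) ^ 2 else 0 := by
    have h3 : ∑ i, ∑ j, (if i < j then (x i - x j) ^ 2 else 0)
        = ∑ i, ∑ j, if j < i then (x i - x j) ^ 2 else 0 := by
      rw [Finset.sum_comm]
      refine Finset.sum_congr rfl fun i _ => Finset.sum_congr rfl fun j _ => ?_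
      rw [← neg_sub, neg_sq]
    rw [two_mul]
    nth_rewrite 2 [h3]
    simp only [← Finset.sum_add_distrib]
    refine Finset.sum_congr rfl fun i _ => Finset.sum_congr rfl fun j _ => ?_
    rcases lt_trichotomy i j with h | h | h
    · simp [h, h.not_gt]
    · simp [h]
    · simp [h, h.not_gt]
  unfold sampleVar
  rw [h1, h2, mul_assoc, mul_div_mul_left _ _ two_ne_zero]

lemma integral_exp_neg_sq_le (hae : ∀ᵐ x ∂M, ∀ i, x i ∈ Set.Icc (0 : ℝ) 1)
    {s : ℝ} (hs : 0 ≤ s) (i j : Fin n) :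
    ∫ x, Real.exp (-(s * (x i - x j) ^ 2)) ∂M ≤
      Real.exp (-((s - s ^ 2 / 2) * ∫ x, (x i - x j) ^ 2 ∂M)) := by
  have hI : ∀ {f : (Fin n → ℝ) → ℝ}, Continuous f → Integrable f M :=
    fun hf => integrable_of_continuous_cube hae hf
  have h1 : ∫ x, Real.exp (-(s * (x i - x j) ^ 2)) ∂M ≤
      ∫ x, (1 - (s - s ^ 2 / 2) * (x i - x j) ^ 2) ∂M := by
    apply integral_mono_ae (hI (by fun_prop)) (hI (by fun_prop))
    filter_upwards [hae] with x hx
    have h := exp_neg_le_quadratic (x := s * (x i - x j) ^ 2) (by positivity)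
    -- a number in `[0, 1]` dominates its square
    have hd : (x i - x j) ^ 2 ≤ 1 := by
      have h1 := hx i; have h2 := hx j
      rw [Set.mem_Icc] at h1 h2
      rw [sq_le_one_iff_abs_le_one, abs_le]
      constructor <;> linarith
    have hd2 : ((x i - x j) ^ 2) ^ 2 ≤ (x i - x j) ^ 2 := by
      nlinarith [sq_nonneg (x i - x j)]
    nlinarith [mul_le_mul_of_nonneg_left hd2 (sq_nonneg s)]
  rw [integral_sub (hI (by fun_prop)) (hI (by fun_prop)), integral_const_mul] at h1
  simp only [integral_const, probReal_univ, smul_eq_mul, mul_one] at h1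
  linarith [Real.add_one_le_exp (-((s - s ^ 2 / 2) * ∫ x, (x i - x j) ^ 2 ∂M))]

/-- Exponential moment of a sum of squared differences over disjoint pairs, which are
independent. -/
lemma integral_exp_neg_class_le [NeZero n] (hae : ∀ᵐ x ∂M, ∀ i, x i ∈ Set.Icc (0 : ℝ) 1)
    (hind : iIndepFun (fun (i : Fin n) (x : Fin n → ℝ) => x i) M)
    {s : ℝ} (hs : 0 ≤ s) (c : Fin n) (T : Finset (Fin n)) (hT : T ⊆ pairClass c) :
    ∫ x, Real.exp (-(s * ∑ i ∈ T, (x i - x (c - i)) ^ 2)) ∂M ≤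
      Real.exp (-((s - s ^ 2 / 2) * ∑ i ∈ T, ∫ x, (x i - x (c - i)) ^ 2 ∂M)) := by
  induction T using Finset.induction_on with
  | empty => simp
  | insert a T ha ih =>
    have hlt : ∀ i ∈ insert a T, i < c - i := fun i hi =>
      (Finset.mem_filter.1 (hT hi)).2
    have hTsub := (Finset.subset_insert a T).trans hT
    have hdisj : Disjoint ({a, c - a} : Finset (Fin n)) (T ∪ T.image fun i => c - i) := by
      have ha' := hlt a (Finset.mem_insert_self a T)
      rw [Finset.disjoint_left]
      intro k hk hk'
      simp only [Finset.mem_insert, Finset.mem_singleton] at hk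
      simp only [Finset.mem_union, Finset.mem_image] at hk'
      rcases hk with rfl | rfl <;> rcases hk' with h | ⟨i, hi, h⟩
      · exact ha h
      · have hi' := hlt i (Finset.mem_insert_of_mem hi)
        have : c - k = i := by rw [← h]; abel
        rw [this, ← h] at ha'
        exact lt_asymm hi' ha'
      · have hi' := hlt _ (Finset.mem_insert_of_mem h)
        rw [sub_sub_cancel] at hi'
        exact lt_asymm hi' ha'
      · exact ha ((sub_right_injective h) ▸ hi)
    have hindep := hind.indepFun_finset _ _ hdisj (fun i => by fun_prop)
    let F : (({a, c - a} : Finset (Fin n)) → ℝ) → ℝ := fun y =>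
      Real.exp (-(s * (y ⟨a, by simp⟩ - y ⟨c - a, by simp⟩) ^ 2))
    let G : (((T ∪ T.image fun i => c - i) : Finset (Fin n)) → ℝ) → ℝ := fun y =>
      Real.exp (-(s * ∑ i ∈ T.attach, (y ⟨i.1, Finset.mem_union_left _ i.2⟩ -
        y ⟨c - i.1, Finset.mem_union_right _ (Finset.mem_image_of_mem _ i.2)⟩) ^ 2))
    have hF : Measurable F := by fun_prop
    have hG : Measurable G := by fun_prop
    have hFG := hindep.comp hF hG
    have hprod := hFG.integral_mul_eq_mul_integral (hF.comp (by fun_prop)).aestronglyMeasurable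
      (hG.comp (by fun_prop)).aestronglyMeasurable
    have hGx : ∀ x : Fin n → ℝ, G (fun i => x i) =
        Real.exp (-(s * ∑ i ∈ T, (x i - x (c - i)) ^ 2)) := by
      intro x
      simp only [G]
      rw [Finset.sum_attach T (fun i => (x i - x (c - i)) ^ 2)]
    have hFx : ∀ x : Fin n → ℝ, F (fun i => x i) =
        Real.exp (-(s * (x a - x (c - a)) ^ 2)) := fun x => rfl
    simp only [Pi.mul_apply, Function.comp_def, hGx, hFx] at hprod
    simp only [Finset.sum_insert ha, mul_add, neg_add, Real.exp_add]
    rw [hprod]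
    exact mul_le_mul (integral_exp_neg_sq_le hae hs a (c - a)) (ih hTsub)
      (integral_nonneg fun x => (Real.exp_pos _).le) (Real.exp_pos _).le

/-- Jensen's inequality over the classes. Each class is compensated by its own mean before
averaging, so every summand has expectation at most `1`. -/
lemma integral_exp_sampleVar_le (hn : 2 ≤ n) (hae : ∀ᵐ x ∂M, ∀ i, x i ∈ Set.Icc (0 : ℝ) 1)
    (hind : iIndepFun (fun (i : Fin n) (x : Fin n → ℝ) => x i) M) {s : ℝ} (hs : 0 ≤ s) :
    ∫ x, Real.exp (((n : ℝ) - 1) * ((s - s ^ 2 / 2) * (∫ z, sampleVar n z ∂M)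
      - s * sampleVar n x)) ∂M ≤ 1 := by
  have : NeZero n := ⟨by omega⟩
  have hI : ∀ {f : (Fin n → ℝ) → ℝ}, Continuous f → Integrable f M :=
    fun hf => integrable_of_continuous_cube hae hf
  have hn' : (2 : ℝ) ≤ n := by exact_mod_cast hn
  have hn0 : (n : ℝ) ≠ 0 := by linarith
  have hn1 : (n : ℝ) - 1 ≠ 0 := by linarith
  set κ := s - s ^ 2 / 2
  let S : Fin n → (Fin n → ℝ) → ℝ := fun c x => ∑ i ∈ pairClass c, (x i - x (c - i)) ^ 2
  let E : Fin n → ℝ := fun c => ∑ i ∈ pairClass c, ∫ x, (x i - x (c - i)) ^ 2 ∂M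
  have hW : ∫ z, sampleVar n z ∂M = (∑ c, E c) / ((n : ℝ) * ((n : ℝ) - 1)) := by
    simp_rw [sampleVar_eq_sum_pairClass]
    rw [integral_div, integral_finsetSum _ (fun i _ => hI (by fun_prop))]
    congr 1
    refine Finset.sum_congr rfl fun i _ => ?_
    rw [integral_finsetSum _ (fun j _ => hI (by fun_prop))]
  have hpt : ∀ x, Real.exp (((n : ℝ) - 1) * (κ * (∫ z, sampleVar n z ∂M) - s * sampleVar n x))
      ≤ ∑ c, (n : ℝ)⁻¹ * Real.exp (κ * E c - s * S c x) := by
    intro x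
    have := convexOn_exp.map_sum_le (t := Finset.univ) (w := fun _ : Fin n => (n : ℝ)⁻¹)
      (p := fun c => κ * E c - s * S c x) (fun _ _ => by positivity)
      (by simp [hn0]) (fun _ _ => Set.mem_univ _)
    simp only [smul_eq_mul] at this
    convert! this using 2
    rw [hW, sampleVar_eq_sum_pairClass, ← Finset.mul_sum, Finset.sum_sub_distrib,
      ← Finset.mul_sum, ← Finset.mul_sum]
    simp only [S]
    field_simp
  have hScont : ∀ c, Continuous (S c) := fun c => by simp only [S]; fun_prop
  have hVc := continuous_sampleVar (n := n)
  calc _ ≤ ∫ x, ∑ c, (n : ℝ)⁻¹ * Real.exp (κ * E c - s * S c x) ∂M :=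
        integral_mono (hI (by fun_prop)) (hI (by fun_prop)) hpt
    _ = ∑ c, (n : ℝ)⁻¹ * ∫ x, Real.exp (κ * E c - s * S c x) ∂M := by
        rw [integral_finsetSum _ (fun c _ => hI (by fun_prop))]
        simp_rw [integral_const_mul]
    _ ≤ ∑ c : Fin n, (n : ℝ)⁻¹ * 1 := by
        refine Finset.sum_le_sum fun c _ => mul_le_mul_of_nonneg_left ?_ (by positivity)
        simp_rw [sub_eq_add_neg, Real.exp_add]
        rw [integral_const_mul]
        have h := integral_exp_neg_class_le hae hind hs c _ (Finset.Subset.refl _)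
        calc _ ≤ Real.exp (κ * E c) * Real.exp (-(κ * E c)) :=
              mul_le_mul_of_nonneg_left h (Real.exp_pos _).le
          _ = 1 := by rw [← Real.exp_add]; simp
    _ = 1 := by simp [hn0]

/-- Lower tail of the sample variance, with relative deviation `q`. -/
lemma sampleVar_tail (hn : 2 ≤ n) (hae : ∀ᵐ x ∂M, ∀ i, x i ∈ Set.Icc (0 : ℝ) 1)
    (hind : iIndepFun (fun (i : Fin n) (x : Fin n → ℝ) => x i) M) {q : ℝ} (hq : 0 < q) :
    M.real {x | (∫ z, sampleVar n z ∂M) * q ≤ (∫ z, sampleVar n z ∂M) - sampleVar n x} ≤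
      Real.exp (-(((n : ℝ) - 1) * (∫ z, sampleVar n z ∂M) * q ^ 2 / 2)) := by
  have hn' : (2 : ℝ) ≤ n := by exact_mod_cast hn
  set W := ∫ z, sampleVar n z ∂M
  have hVc := continuous_sampleVar (n := n)
  have h := chernoff_cube hae (by fun_prop) (b := 0)
    ((integral_exp_sampleVar_le hn hae hind hq.le).trans_eq Real.exp_zero.symm)
    (((n : ℝ) - 1) * W * q ^ 2 / 2)
  rw [zero_sub] at h
  refine le_trans (measureReal_mono fun x hx => ?_) h
  simp only [Set.mem_ofPred_eq] at hx ⊢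
  have h1 : W * q * q ≤ (W - sampleVar n x) * q := mul_le_mul_of_nonneg_right hx hq.le
  have h2 : W * q ^ 2 / 2 ≤ (q - q ^ 2 / 2) * W - q * sampleVar n x := by nlinarith
  have := mul_le_mul_of_nonneg_left h2 (by linarith : (0 : ℝ) ≤ (n : ℝ) - 1)
  calc _ = _ := by ring
    _ ≤ _ := this

end Cube

/-! ### Combination of the two tails -/

lemma sampleVar_nonneg {n : ℕ} (hn : 2 ≤ n) (x : Fin n → ℝ) : 0 ≤ sampleVar n x := by
  have hn' : (2 : ℝ) ≤ n := by exact_mod_cast hn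
  have : (0 : ℝ) < (n : ℝ) - 1 := by linarith
  unfold sampleVar
  positivity

/-- The deterministic step: off both exceptional events the deviation obeys the empirical bound.
Here `w = √(𝔼 Vₙ)`, `k = √(2 L)`, `N = √n` and `N₁ = √(n - 1)`. -/
lemma deviation_le {S V w k N N₁ : ℝ} (hV : 0 ≤ V) (hk : 0 ≤ k) (hN₁ : 0 < N₁)
    (hN : N₁ ≤ N) (hS : S ≤ N * w * k + k ^ 2 / 6) (hVw : w ^ 2 - w * k / N₁ ≤ V) :
    S / N ^ 2 ≤ √V * k / N + 7 * (k ^ 2 / 2) / (3 * N₁ ^ 2) := by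
  have hN0 : 0 < N := hN₁.trans_le hN
  have hy := Real.sqrt_nonneg V
  have hyy := Real.sq_sqrt hV
  set y := √V
  have hkN : 0 ≤ k / N₁ := by positivity
  have hwy : w ≤ y + k / N₁ := by
    by_contra hcon
    push Not at hcon
    have h1 : w * k / N₁ = w * (k / N₁) := by ring
    have h2 : y * w < (w - k / N₁) * w :=
      mul_lt_mul_of_pos_right (by linarith) (by linarith)
    nlinarith
  have h1 : S / N ^ 2 ≤ w * k / N + k ^ 2 / (6 * N ^ 2) := by
    calc S / N ^ 2 ≤ (N * w * k + k ^ 2 / 6) / N ^ 2 := by gcongr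
      _ = _ := by field_simp
  have h2 : w * k / N ≤ y * k / N + k ^ 2 / N₁ ^ 2 := by
    calc w * k / N ≤ (y + k / N₁) * k / N := by gcongr
      _ = y * k / N + k ^ 2 / (N₁ * N) := by field_simp
      _ ≤ y * k / N + k ^ 2 / (N₁ * N₁) := by gcongr
      _ = _ := by rw [← sq]
  have h3 : k ^ 2 / (6 * N ^ 2) ≤ k ^ 2 / (6 * N₁ ^ 2) := by gcongr
  have h4 : 7 * (k ^ 2 / 2) / (3 * N₁ ^ 2) = k ^ 2 / N₁ ^ 2 + k ^ 2 / (6 * N₁ ^ 2) := by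
    field_simp; ring
  linarith

/-- **Theorem 12 (empirical Bernstein bound for independent, not necessarily identically
distributed variables)**: with probability at least `1 - δ` in `𝐗`,
`𝔼[Pₙ(𝐗)] ≤ Pₙ(𝐗) + √(2 Vₙ(𝐗) ln(2/δ)/n) + 7 ln(2/δ)/(3(n-1))`. -/
theorem empirical_bernstein_independent (n : ℕ) (hn : 2 ≤ n)
    (μ : Fin n → Measure ℝ) [∀ i, IsProbabilityMeasure (μ i)]
    (hrange : ∀ i, ∀ᵐ x ∂μ i, x ∈ Set.Icc (0 : ℝ) 1) (δ : ℝ) (hδ : 0 < δ) :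
    1 - δ ≤ ((Measure.pi μ)
      {X | (∫ z, sampleMean n z ∂Measure.pi μ) ≤
        sampleMean n X +
          Real.sqrt (2 * sampleVar n X * Real.log (2 / δ) / n) +
            7 * Real.log (2 / δ) / (3 * ((n : ℝ) - 1))}).toReal := by
  rcases le_or_gt 1 δ with hδ1 | hδ1
  · exact le_trans (by linarith) ENNReal.toReal_nonneg
  have hae : ∀ᵐ x ∂Measure.pi μ, ∀ i, x i ∈ Set.Icc (0 : ℝ) 1 := by
    rw [ae_all_iff]
    exact fun i => (Measure.quasiMeasurePreserving_eval μ i).ae (hrange i)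
  have hind : iIndepFun (fun (i : Fin n) (x : Fin n → ℝ) => x i) (Measure.pi μ) :=
    iIndepFun_pi (X := fun _ => id) (fun _ => aemeasurable_id)
  change 1 - δ ≤ (Measure.pi μ).real _
  set M := Measure.pi μ
  set L := Real.log (2 / δ) with hL
  set A := {X : Fin n → ℝ | (∫ z, sampleMean n z ∂M) ≤ sampleMean n X +
    √(2 * sampleVar n X * L / n) + 7 * L / (3 * ((n : ℝ) - 1))} with hA
  have hn' : (2 : ℝ) ≤ n := by exact_mod_cast hn
  have hL0 : 0 < L := Real.log_pos (by rw [lt_div_iff₀ hδ]; linarith)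
  have hexpL : Real.exp (-L) = δ / 2 := by
    rw [Real.exp_neg, hL, Real.exp_log (by positivity), inv_div]
  have hVc := continuous_sampleVar (n := n)
  have hAm : MeasurableSet A := by
    apply measurableSet_le
    · fun_prop
    · unfold sampleMean; fun_prop
  have hmean : ∀ X : Fin n → ℝ, (∫ z, sampleMean n z ∂M) - sampleMean n X
      = (∑ i, ((∫ z, z i ∂M) - X i)) / n := by
    intro X
    unfold sampleMean
    rw [integral_div, integral_finsetSum _
      (fun i _ => integrable_of_continuous_cube hae (by fun_prop)), Finset.sum_sub_distrib]
    ring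
  set W := ∫ z, sampleVar n z ∂M with hW
  have hW0 : 0 ≤ W := integral_nonneg fun x => sampleVar_nonneg hn x
  have hvar := sum_variance_le_integral_sampleVar hn hae hind
  rw [← hW] at hvar
  set N := √(n : ℝ)
  set N₁ := √((n : ℝ) - 1)
  set k := √(2 * L)
  set w := √W
  have hN2 : N ^ 2 = n := Real.sq_sqrt (by linarith)
  have hN12 : N₁ ^ 2 = (n : ℝ) - 1 := Real.sq_sqrt (by linarith)
  have hk2 : k ^ 2 = 2 * L := Real.sq_sqrt (by linarith)
  have hw2 : w ^ 2 = W := Real.sq_sqrt hW0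
  have hN0 : 0 < N := Real.sqrt_pos.2 (by linarith)
  have hN10 : 0 < N₁ := Real.sqrt_pos.2 (by linarith)
  have hk0 : 0 < k := Real.sqrt_pos.2 (by linarith)
  have hN1N : N₁ ≤ N := Real.sqrt_le_sqrt (by linarith)
  have hmem : ∀ X : Fin n → ℝ, (∑ i, ((∫ z, z i ∂M) - X i)) / N ^ 2
      ≤ √(sampleVar n X) * k / N + 7 * (k ^ 2 / 2) / (3 * N₁ ^ 2) → X ∈ A := by
    intro X hX
    have h1 := hmean X
    have h2 : √(2 * sampleVar n X * L / n) = √(sampleVar n X) * k / N := by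
      rw [Real.sqrt_div' _ (by linarith), show 2 * sampleVar n X * L = sampleVar n X * (2 * L)
        by ring, Real.sqrt_mul (sampleVar_nonneg hn X)]
    rw [hk2, hN12, hN2] at hX
    simp only [hA, Set.mem_ofPred_eq]
    rw [h2]
    have h3 : 7 * (2 * L / 2) = 7 * L := by ring
    rw [h3] at hX
    linarith
  suffices hcompl : M.real Aᶜ ≤ δ by
    have := probReal_compl_eq_one_sub (μ := M) hAm
    linarith
  rcases hW0.eq_or_lt with hWz | hWpos
  · -- without variance, Bernstein's inequality with `v = 2 L` and `r = 1` has deviation `7 L / 3`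
    have hv : ∑ i, Var[fun x => x i; M] ≤ 2 * L := by
      rw [← hWz] at hvar; linarith
    have hB := bernstein_tail hae hind one_pos hv
    have : Aᶜ ⊆ {x | 2 * L * 1 + 2 * L * 1 ^ 2 / 6 ≤ ∑ i, ((∫ z, z i ∂M) - x i)} := by
      intro X hX
      by_contra hcon
      simp only [Set.mem_ofPred_eq, not_le] at hcon
      refine hX (hmem X ?_)
      have h1 : (∑ i, ((∫ z, z i ∂M) - X i)) / N ^ 2 ≤ 7 * (k ^ 2 / 2) / (3 * N ^ 2) := by
        rw [div_le_div_iff₀ (by positivity) (by positivity), hk2]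
        have : 0 < N ^ 2 := by positivity
        nlinarith
      have h2 : 7 * (k ^ 2 / 2) / (3 * N ^ 2) ≤ 7 * (k ^ 2 / 2) / (3 * N₁ ^ 2) := by gcongr
      have h3 : 0 ≤ √(sampleVar n X) * k / N := by positivity
      linarith
    calc M.real Aᶜ ≤ _ := measureReal_mono this
      _ ≤ _ := hB
      _ = Real.exp (-L) := by congr 1; ring
      _ ≤ δ := by rw [hexpL]; linarith
  · have hw0 : 0 < w := Real.sqrt_pos.2 hWpos
    have hB := bernstein_tail hae hind (r := k / (N * w)) (by positivity) hvar
    have hT := sampleVar_tail hn hae hind (q := k / (N₁ * w)) (by positivity)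
    rw [← hW] at hT
    have e1 : (n : ℝ) * W * (k / (N * w)) = N * w * k := by
      rw [← hN2, ← hw2]; field_simp
    have e2 : (n : ℝ) * W * (k / (N * w)) ^ 2 = k ^ 2 := by
      rw [← hN2, ← hw2]; field_simp
    have e3 : W * (k / (N₁ * w)) = w * k / N₁ := by
      rw [← hw2]; field_simp
    have e4 : ((n : ℝ) - 1) * W * (k / (N₁ * w)) ^ 2 = k ^ 2 := by
      rw [← hN12, ← hw2]; field_simp
    have e5 : k ^ 2 / 2 = L := by rw [hk2]; ring
    rw [e1, e2, e5, hexpL] at hB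
    rw [e3, e4, e5, hexpL] at hT
    have hsub : Aᶜ ⊆ {x | N * w * k + k ^ 2 / 6 ≤ ∑ i, ((∫ z, z i ∂M) - x i)} ∪
        {x | w * k / N₁ ≤ W - sampleVar n x} := by
      intro X hX
      by_contra hcon
      simp only [Set.mem_union, Set.mem_ofPred_eq, not_or, not_le] at hcon
      refine hX (hmem X (deviation_le (sampleVar_nonneg hn X) hk0.le hN10 hN1N
        hcon.1.le ?_))
      rw [hw2]; linarith [hcon.2]
    calc M.real Aᶜ ≤ _ := measureReal_mono hsub
      _ ≤ _ := measureReal_union_le _ _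
      _ ≤ δ / 2 + δ / 2 := add_le_add hB hT
      _ = δ := by ring
end

section
/- Let n ≥ 2, t > 0 and define Ψ(x, t) = P_n(x) + sqrt(18 V_n(x) t / n) + 11t/(n−1) for x ∈ [0,1]^n. Then for all x, x' ∈ [0,1]^n, Ψ(x, t) − Ψ(x', t) ≤ (1 + 6 sqrt(t/n)) · ‖x − x'‖_∞. -/
/-!
The sample mean is 1-Lipschitz for the sup norm. The square root of the sample variance is a
Euclidean seminorm of `x` (a multiple of the norm of the array `xᵢ - xⱼ`), so by the triangle
inequality (`sqrt_sampleVar_le`) its increment from `y` to `x` is at most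
`√(Vₙ(x - y))`. Expanding the square gives
`Vₙ(d) ≤ (∑ dᵢ²)/(n-1) ≤ (n/(n-1)) ‖d‖² ≤ 2 ‖d‖²` (`sampleVar_le`), and `√(18 · 2) = 6`.
-/

open MeasureTheory

/-- `Ψ(x,t) = Pₙ(x) + √(18Vₙ(x)t/n) + 11t/(n-1)`. -/
noncomputable def Psi (n : ℕ) (x : Fin n → ℝ) (t : ℝ) : ℝ :=
  sampleMean n x + Real.sqrt (18 * sampleVar n x * t / n) + 11 * t / ((n : ℝ) - 1)

/-- The triangle inequality for the seminorm `√Vₙ`. -/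
lemma sqrt_sampleVar_le (n : ℕ) (x y : Fin n → ℝ) :
    Real.sqrt (sampleVar n x) ≤ Real.sqrt (sampleVar n y) + Real.sqrt (sampleVar n (x - y)) := by
  let F : (Fin n → ℝ) → EuclideanSpace ℝ (Fin n × Fin n) :=
    fun z => WithLp.toLp 2 fun p => z p.1 - z p.2
  have hF : ∀ z, Real.sqrt (sampleVar n z) = ‖F z‖ / Real.sqrt (2 * (n : ℝ) * ((n : ℝ) - 1)) := by
    intro z
    have hS : 0 ≤ ∑ i, ∑ j, (z i - z j) ^ 2 :=
      Finset.sum_nonneg fun i _ => Finset.sum_nonneg fun j _ => sq_nonneg _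
    rw [sampleVar, Real.sqrt_div hS, EuclideanSpace.norm_eq, Fintype.sum_prod_type]
    simp [F]
  have hadd : F x = F y + F (x - y) := by
    ext p
    simp only [F, PiLp.add_apply, Pi.sub_apply]
    ring
  rw [hF, hF, hF, ← add_div, hadd]
  gcongr
  exact norm_add_le _ _

/-- The factor `2` bounds `n / (n - 1)` for `n ≥ 2`. -/
lemma sampleVar_le (n : ℕ) (hn : 2 ≤ n) (d : Fin n → ℝ) : sampleVar n d ≤ 2 * ‖d‖ ^ 2 := by
  have hn' : (2 : ℝ) ≤ n := by exact_mod_cast hn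
  have hexp : ∑ i, ∑ j, (d i - d j) ^ 2 = 2 * n * ∑ i, d i ^ 2 - 2 * (∑ i, d i) ^ 2 := by
    simp only [sub_sq, Finset.sum_add_distrib, Finset.sum_sub_distrib, Finset.sum_const,
      Finset.card_univ, Fintype.card_fin, nsmul_eq_mul, ← Finset.mul_sum, ← Finset.sum_mul]
    ring
  have hsq : ∑ i, d i ^ 2 ≤ n * ‖d‖ ^ 2 := by
    calc ∑ i, d i ^ 2 ≤ ∑ _i : Fin n, ‖d‖ ^ 2 :=
          Finset.sum_le_sum fun i _ => sq_le_sq' (abs_le.mp (norm_le_pi_norm d i)).1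
            (abs_le.mp (norm_le_pi_norm d i)).2
      _ = n * ‖d‖ ^ 2 := by simp
  rw [sampleVar, div_le_iff₀ (by nlinarith), hexp]
  have h1 : 2 * (n : ℝ) * ∑ i, d i ^ 2 ≤ 2 * n * (n * ‖d‖ ^ 2) := by gcongr
  have h2 : 0 ≤ (n : ℝ) * ‖d‖ ^ 2 * (n - 2) :=
    mul_nonneg (by positivity) (by linarith)
  nlinarith [sq_nonneg (∑ i, d i)]

lemma sampleMean_sub_le (n : ℕ) (hn : 2 ≤ n) (x y : Fin n → ℝ) :
    sampleMean n x - sampleMean n y ≤ ‖x - y‖ := by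
  have hn' : (0 : ℝ) < n := by positivity
  rw [sampleMean, sampleMean, ← sub_div, ← Finset.sum_sub_distrib, div_le_iff₀ hn']
  calc ∑ i, (x i - y i) ≤ ∑ _i : Fin n, ‖x - y‖ :=
        Finset.sum_le_sum fun i _ => (le_abs_self _).trans (norm_le_pi_norm (x - y) i)
    _ = ‖x - y‖ * n := by simp [mul_comm]

/-- **Lemma 13 (ii)**: `Ψ(x,t) - Ψ(x',t) ≤ (1 + 6√(t/n)) ‖x - x'‖_∞` (the norm on
`Fin n → ℝ` is the sup-norm). -/
theorem Psi_lipschitz (n : ℕ) (hn : 2 ≤ n) (t : ℝ) (ht : 0 < t)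
    (x x' : Fin n → ℝ) (hx : ∀ i, x i ∈ Set.Icc (0 : ℝ) 1)
    (hx' : ∀ i, x' i ∈ Set.Icc (0 : ℝ) 1) :
    Psi n x t - Psi n x' t ≤ (1 + 6 * Real.sqrt (t / n)) * ‖x - x'‖ := by
  have hc : ∀ z, Real.sqrt (18 * sampleVar n z * t / n)
      = Real.sqrt 18 * Real.sqrt (t / n) * Real.sqrt (sampleVar n z) := by
    intro z
    rw [← Real.sqrt_mul (by norm_num), ← Real.sqrt_mul (by positivity)]
    congr 1
    ring
  have hV : Real.sqrt (sampleVar n (x - x')) ≤ Real.sqrt 2 * ‖x - x'‖ := by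
    rw [← Real.sqrt_sq (norm_nonneg (x - x')), ← Real.sqrt_mul (by norm_num)]
    exact Real.sqrt_le_sqrt (sampleVar_le n hn _)
  have h6 : Real.sqrt 18 * Real.sqrt 2 = 6 := by
    rw [← Real.sqrt_mul (by norm_num), Real.sqrt_eq_iff_mul_self_eq_of_pos (by norm_num)]
    norm_num
  have hdev : Real.sqrt 18 * Real.sqrt (t / n) * Real.sqrt (sampleVar n x)
      ≤ Real.sqrt 18 * Real.sqrt (t / n) *
        (Real.sqrt (sampleVar n x') + Real.sqrt 2 * ‖x - x'‖) := by
    gcongr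
    exact (sqrt_sampleVar_le n x x').trans (by gcongr)
  have hconst : Real.sqrt 18 * Real.sqrt (t / n) * (Real.sqrt 2 * ‖x - x'‖)
      = 6 * Real.sqrt (t / n) * ‖x - x'‖ := by
    rw [← h6]
    ring
  have hmean := sampleMean_sub_le n hn x x'
  rw [Psi, Psi, hc, hc]
  rw [mul_add, hconst] at hdev
  linarith
end
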